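/- For every r ≥ 2 and g ≥ 3 there exists an r-regular simple graph of girth at least g with at most 4·g·r^g vertices. -/

import Mathlib

open SimpleGraph

/-- Every walk from `a` to `b` closing up an edge has length at least `g - 1`. -/
def ESFar {V : Type*} (g : ℕ) (G : SimpleGraph V) (a b : V) : Prop :=
  ∀ p : G.Walk a b, g ≤ p.length + 1

/-- Girth at least `g`, phrased through deleted edges. -/
def ESGood {V : Type*} (g : ℕ) (G : SimpleGraph V) : Prop :=
  ∀ a b, G.Adj a b → ESFar g (G \ edge a b) a b

theorem ESFar.mono {V : Type*} {g : ℕ} {G H : SimpleGraph V} {a b : V} (h : ESFar g G a b)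
    (hle : H ≤ G) : ESFar g H a b := fun p => by simpa using h (p.mapLe hle)

theorem ESFar.symm {V : Type*} {g : ℕ} {G : SimpleGraph V} {a b : V} (h : ESFar g G a b) :
    ESFar g G b a := fun p => by simpa using h p.reverse

theorem ESFar.ne {V : Type*} {g : ℕ} (hg : 3 ≤ g) {G : SimpleGraph V} {a b : V}
    (h : ESFar g G a b) : a ≠ b := by
  rintro rfl
  have := h Walk.nil
  simp at this; omega

theorem ESFar.not_adj {V : Type*} {g : ℕ} (hg : 3 ≤ g) {G : SimpleGraph V} {a b : V}
    (h : ESFar g G a b) : ¬ G.Adj a b := by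
  intro hab
  have := h (Walk.cons hab Walk.nil)
  simp at this; omega

theorem ESGood.mono {V : Type*} {g : ℕ} {G H : SimpleGraph V} (h : ESGood g G)
    (hle : H ≤ G) : ESGood g H := fun a b hab =>
  (h a b (hle hab)).mono (sdiff_le_sdiff_right hle)

theorem es_walk_split {V : Type*} {H : SimpleGraph V} {x u a b : V}
    (p : (H ⊔ edge x u).Walk a b) :
    (∃ q : H.Walk a b, q.length ≤ p.length) ∨
    (∃ (q₁ : H.Walk a x) (q₂ : H.Walk u b), q₁.length + q₂.length + 1 ≤ p.length) ∨
    (∃ (q₁ : H.Walk a u) (q₂ : H.Walk x b), q₁.length + q₂.length + 1 ≤ p.length) := by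
  induction p with
  | nil => exact Or.inl ⟨Walk.nil, by simp⟩
  | @cons a a' b h p ih =>
    rw [sup_adj] at h
    rcases h with h | h
    · rcases ih with ⟨q, hq⟩ | ⟨q₁, q₂, hq⟩ | ⟨q₁, q₂, hq⟩
      · exact Or.inl ⟨Walk.cons h q, by simpa using hq⟩
      · exact Or.inr (Or.inl ⟨Walk.cons h q₁, q₂, by simp; omega⟩)
      · exact Or.inr (Or.inr ⟨Walk.cons h q₁, q₂, by simp; omega⟩)
    · rw [edge_adj] at h
      obtain ⟨⟨rfl, rfl⟩ | ⟨rfl, rfl⟩, -⟩ := h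
      · rcases ih with ⟨q, hq⟩ | ⟨q₁, q₂, hq⟩ | ⟨q₁, q₂, hq⟩
        · exact Or.inr (Or.inl ⟨Walk.nil, q, by simp; omega⟩)
        · exact Or.inr (Or.inl ⟨Walk.nil, q₂, by simp; omega⟩)
        · exact Or.inl ⟨q₂, by simp; omega⟩
      · rcases ih with ⟨q, hq⟩ | ⟨q₁, q₂, hq⟩ | ⟨q₁, q₂, hq⟩
        · exact Or.inr (Or.inr ⟨Walk.nil, q, by simp; omega⟩)
        · exact Or.inl ⟨q₂, by simp; omega⟩
        · exact Or.inr (Or.inr ⟨Walk.nil, q₂, by simp; omega⟩)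

theorem ESGood.add {V : Type*} {g : ℕ} {H : SimpleGraph V} {x u : V} (h : ESGood g H)
    (hf : ESFar g H x u) : ESGood g (H ⊔ edge x u) := by
  intro a b hab
  by_cases hH : H.Adj a b
  · intro p
    have hle : (H ⊔ edge x u) \ edge a b ≤ (H \ edge a b) ⊔ edge x u := by
      rw [sup_sdiff]
      exact sup_le_sup_left sdiff_le _
    have hs := es_walk_split (p.mapLe hle)
    simp only [Walk.length_map] at hs
    have hle' : H \ edge a b ≤ H := sdiff_le
    rcases hs with ⟨q, hq⟩ | ⟨q₁, q₂, hq⟩ | ⟨q₁, q₂, hq⟩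
    · have := h a b hH q
      omega
    · have := hf (((q₁.mapLe hle').reverse.append (Walk.cons hH Walk.nil)).append
        (q₂.mapLe hle').reverse)
      simp at this hq
      omega
    · have := hf ((q₂.mapLe hle').append
        ((Walk.cons hH.symm Walk.nil).append (q₁.mapLe hle')))
      simp at this hq
      omega
  · have he : (edge x u).Adj a b := by
      rw [sup_adj] at hab
      exact hab.resolve_left hH
    have hle : (H ⊔ edge x u) \ edge a b ≤ H := by
      rw [edge_adj] at he
      obtain ⟨⟨rfl, rfl⟩ | ⟨rfl, rfl⟩, -⟩ := he
      · simp
      · rw [edge_comm]; simp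
    rw [edge_adj] at he
    obtain ⟨⟨rfl, rfl⟩ | ⟨rfl, rfl⟩, -⟩ := he
    · exact hf.mono hle
    · exact hf.symm.mono hle

theorem ESGood.surgery {V : Type*} {g : ℕ} {G : SimpleGraph V} {x y u v : V}
    (h : ESGood g G) (huv : G.Adj u v) (hxu : ESFar g G x u) (hxv : ESFar g G x v)
    (hyv : ESFar g G y v) :
    ESGood g (((G \ edge u v) ⊔ edge x u) ⊔ edge y v) := by
  have hle : G \ edge u v ≤ G := sdiff_le
  refine ((h.mono hle).add (hxu.mono hle)).add ?_
  intro p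
  rcases es_walk_split p with ⟨q, hq⟩ | ⟨q₁, q₂, hq⟩ | ⟨q₁, q₂, hq⟩
  · have := hyv.mono hle q
    omega
  · have := h u v huv q₂
    omega
  · have := hxv.mono hle q₂
    omega

theorem ESGood.le_egirth {V : Type*} {g : ℕ} {G : SimpleGraph V} (h : ESGood g G) :
    (g : ℕ∞) ≤ G.egirth := by
  rw [SimpleGraph.le_egirth]
  intro a w hw
  cases w with
  | nil => simp at hw
  | @cons _ b _ hab p =>
    rw [Walk.cons_isCycle_iff] at hw
    have hp : ∀ e ∈ p.edges, e ∈ (G \ edge a b).edgeSet := by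
      intro e he
      have h1 := p.edges_subset_edgeSet he
      have h2 : e ≠ s(a, b) := fun h => hw.2 (h ▸ he)
      induction e with
      | _ c d =>
        simp only [mem_edgeSet, sdiff_adj, edge_adj] at h1 ⊢
        refine ⟨h1, fun hh => h2 ?_⟩
        simpa using hh.1
    have := (h a b hab).symm (p.transfer _ hp)
    simp at this
    simp
    exact_mod_cast this

open Classical in
/-- The degree, with classical instances. -/
noncomputable def esDeg {V : Type*} [Fintype V] (G : SimpleGraph V) (w : V) : ℕ := G.degree w

open Classical in
theorem es_degree_add {V : Type*} [Fintype V] [DecidableEq V] {H : SimpleGraph V} {x u : V} (hne : x ≠ u)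
    (hn : ¬ H.Adj x u) (w : V) :
    esDeg (H ⊔ edge x u) w = esDeg H w + ((if w = x then 1 else 0) + (if w = u then 1 else 0)) := by
  have hn' : ¬ H.Adj u x := fun h => hn h.symm
  obtain ⟨K, hK⟩ : ∃ K, K = H ⊔ edge x u := ⟨_, rfl⟩
  rw [← hK]
  simp only [esDeg, ← card_neighborFinset_eq_degree]
  by_cases h1 : w = x
  · subst h1
    have : K.neighborFinset w = insert u (H.neighborFinset w) := by
      ext z
      simp [hK, edge_adj]
      grind
    rw [this, Finset.card_insert_of_notMem (by simpa)]
    simp [hne]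
  · by_cases h2 : w = u
    · subst h2
      have : K.neighborFinset w = insert x (H.neighborFinset w) := by
        ext z
        simp [hK, edge_adj]
        grind
      rw [this, Finset.card_insert_of_notMem (by simpa)]
      simp [h1]
    · have : K.neighborFinset w = (H.neighborFinset w) := by
        ext z
        simp [hK, edge_adj]
        grind
      rw [this]
      simp [h1, h2]

open Classical in
theorem es_degree_surgery {V : Type*} [Fintype V] [DecidableEq V] {g : ℕ} (hg : 3 ≤ g) {G : SimpleGraph V}
    {x y u v : V}
    (huv : G.Adj u v) (hxu : ESFar g G x u) 
    (hyu : ESFar g G y u) (hyv : ESFar g G y v) (w : V) :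
    esDeg (((G \ edge u v) ⊔ edge x u) ⊔ edge y v) w =
      esDeg G w + ((if w = x then 1 else 0) + (if w = y then 1 else 0)) := by
  have hle : G \ edge u v ≤ G := sdiff_le
  have hG : G = (G \ edge u v) ⊔ edge u v := by
    rw [sdiff_sup_self, eq_comm, sup_eq_left]
    intro a b hab
    rw [edge_adj] at hab
    obtain ⟨⟨rfl, rfl⟩ | ⟨rfl, rfl⟩, -⟩ := hab
    · exact huv
    · exact huv.symm
  have e1 : esDeg G w = esDeg ((G \ edge u v) ⊔ edge u v) w := by
    rw [← hG]
  have hne := huv.ne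
  have hyu' := hyu.ne hg
  rw [e1, es_degree_add huv.ne (by simp [edge_adj, hne]),
    es_degree_add (hyv.ne hg) ?_, es_degree_add (hxu.ne hg) ((hxu.mono hle).not_adj hg)]
  · omega
  · have := (hyv.mono hle).not_adj hg
    simp only [sup_adj, edge_adj] 
    grind

open Classical in
theorem es_ball {V : Type*} [Fintype V] {G : SimpleGraph V} {r g : ℕ} (hr : 2 ≤ r)
    (hd : ∀ w, esDeg G w ≤ r) (x : V) :
    (Finset.univ.filter (fun w => ¬ ESFar g G x w)).card < r ^ g := by
  have key : ∀ k, (Finset.univ.filter (fun w => ∃ p : G.Walk x w, p.length = k)).card ≤ r ^ k := by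
    intro k
    induction k with
    | zero =>
      have : (Finset.univ.filter (fun w => ∃ p : G.Walk x w, p.length = 0)) ⊆ {x} := by
        intro w hw
        simp only [Finset.mem_filter, Finset.mem_univ, true_and] at hw
        obtain ⟨p, hp⟩ := hw
        simp [Walk.eq_of_length_eq_zero hp]
      simpa using Finset.card_le_card this
    | succ k ih =>
      have : (Finset.univ.filter (fun w => ∃ p : G.Walk x w, p.length = k + 1)) ⊆
          (Finset.univ.filter (fun w => ∃ p : G.Walk x w, p.length = k)).biUnion
            (fun w => G.neighborFinset w) := by
        intro w hw
        simp only [Finset.mem_filter, Finset.mem_univ, true_and, Finset.mem_biUnion] at hw ⊢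
        obtain ⟨p, hp⟩ := hw
        have : ∃ q : G.Walk w x, q.length = k + 1 := ⟨p.reverse, by simpa⟩
        obtain ⟨q, hq⟩ := this
        cases q with
        | nil => simp at hq
        | cons h q =>
          refine ⟨_, ⟨q.reverse, by simpa using hq⟩, by simpa using h.symm⟩
      refine (Finset.card_le_card this).trans ?_
      refine (Finset.card_biUnion_le_card_mul _ _ r (fun w _ => by simpa [esDeg] using hd w)).trans ?_
      rw [pow_succ]
      exact Nat.mul_le_mul_right _ ih
  have hsub : (Finset.univ.filter (fun w => ¬ ESFar g G x w)) ⊆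
      (Finset.range g).biUnion
        (fun k => Finset.univ.filter (fun w => ∃ p : G.Walk x w, p.length = k)) := by
    intro w hw
    simp only [Finset.mem_filter, Finset.mem_univ, true_and, Finset.mem_biUnion, ESFar,
      not_forall, not_le] at hw ⊢
    obtain ⟨p, hp⟩ := hw
    exact ⟨p.length, by simp; omega, p, rfl⟩
  calc _ ≤ _ := Finset.card_le_card hsub
    _ ≤ _ := Finset.card_biUnion_le
    _ ≤ ∑ k ∈ Finset.range g, r ^ k := Finset.sum_le_sum (fun k _ => key k)
    _ < _ := Nat.geomSum_lt hr (by simp)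

open Classical in
theorem es_regular (r g n : ℕ) (hr : 2 ≤ r) (hg : 3 ≤ g) (hn : n = 4 * r ^ g) :
    ∃ G : SimpleGraph (Fin n), ESGood g G ∧ ∀ w, esDeg G w = r := by
  let S : Finset (SimpleGraph (Fin n)) :=
    Finset.univ.filter (fun G => ESGood g G ∧ ∀ w, esDeg G w ≤ r)
  have hS : S.Nonempty := by
    refine ⟨⊥, ?_⟩
    simp only [S, Finset.mem_filter, Finset.mem_univ, true_and]
    exact ⟨fun a b h => by simp at h, fun w => by simp [esDeg]⟩
  obtain ⟨G, hGS, hmax⟩ := S.exists_max_image (fun G => ∑ w, esDeg G w) hS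
  simp only [S, Finset.mem_filter, Finset.mem_univ, true_and] at hGS hmax
  obtain ⟨hG, hd⟩ := hGS
  refine ⟨G, hG, ?_⟩
  by_contra! hcon
  obtain ⟨x, hx⟩ := hcon
  have hx' : esDeg G x < r := lt_of_le_of_ne (hd x) hx
  -- a graph whose degrees increase at two places contradicts maximality
  have hno : ∀ (x y : Fin n) (G' : SimpleGraph (Fin n)), ESGood g G' →
      (∀ w, esDeg G' w = esDeg G w + ((if w = x then 1 else 0) + (if w = y then 1 else 0))) →
      (∀ w, esDeg G w + ((if w = x then 1 else 0) + (if w = y then 1 else 0)) ≤ r) → False := by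
    intro x y G' h1 h2 h3
    have := hmax G' ⟨h1, fun w => (h2 w).trans_le (h3 w)⟩
    have hlt : ∑ w, esDeg G w < ∑ w, esDeg G' w := by
      refine Finset.sum_lt_sum (fun w _ => ?_) ⟨x, Finset.mem_univ _, ?_⟩
      · rw [h2]; omega
      · rw [h2]; simp
    omega
  -- second deficient vertex
  obtain ⟨y, hy⟩ : ∃ y : Fin n, ∀ w,
      esDeg G w + ((if w = x then 1 else 0) + (if w = y then 1 else 0)) ≤ r := by
    by_cases h2 : esDeg G x + 2 ≤ r
    · refine ⟨x, fun w => ?_⟩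
      have := hd w
      split_ifs with h
      · subst h; omega
      · omega
    · have hex : ∃ y, y ≠ x ∧ esDeg G y < r := by
        by_contra! hall
        have hsum : ∑ w, esDeg G w + 1 = n * r := by
          have e1 : ∑ w, (esDeg G w + if w = x then 1 else 0) = ∑ w : Fin n, r := by
            refine Finset.sum_congr rfl (fun w _ => ?_)
            split_ifs with h
            · subst h; omega
            · have := hall w h
              have := hd w
              omega
          rw [Finset.sum_add_distrib] at e1
          simpa using e1
        have heven : ∑ w, esDeg G w = 2 * G.edgeFinset.card := G.sum_degrees_eq_twice_card_edges
        have : n * r = 2 * (2 * r ^ g * r) := by rw [hn]; ring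
        omega
      obtain ⟨y, hyx, hy⟩ := hex
      refine ⟨y, fun w => ?_⟩
      have := hd w
      split_ifs with h h' h'
      · exact absurd (h'.symm.trans h) hyx
      · subst h; omega
      · subst h'; omega
      · omega
  let B : Finset (Fin n) := Finset.univ.filter (fun w => ¬ ESFar g G x w) ∪
    Finset.univ.filter (fun w => ¬ ESFar g G y w)
  have hB : B.card < 2 * r ^ g := by
    have h1 := es_ball (g := g) hr hd x
    have h2 := es_ball (g := g) hr hd y
    have := Finset.card_union_le (Finset.univ.filter (fun w => ¬ ESFar g G x w))
      (Finset.univ.filter (fun w => ¬ ESFar g G y w))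
    simp only [B]
    omega
  have hC : Bᶜ.card = n - B.card := by rw [Finset.card_compl, Fintype.card_fin]
  have hmem : ∀ w, w ∈ Bᶜ → ESFar g G x w ∧ ESFar g G y w := by
    intro w hw
    simpa [B] using hw
  have hindep : ∀ u ∈ Bᶜ, ∀ v, G.Adj u v → v ∈ B := by
    intro u hu v huv
    by_contra hv
    have hu' := hmem u hu
    have hv' := hmem v (by simpa using hv)
    exact hno x y _ (hG.surgery huv hu'.1 hv'.1 hv'.2)
      (es_degree_surgery hg huv hu'.1 hu'.2 hv'.2) hy
  have hfull : ∀ u ∈ Bᶜ, esDeg G u = r := by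
    intro u hu
    by_contra hne
    have hu' := (hmem u hu).1
    have hlt : esDeg G u < r := lt_of_le_of_ne (hd u) hne
    refine hno x u _ (hG.add hu') (es_degree_add (hu'.ne hg) (hu'.not_adj hg)) (fun w => ?_)
    have := hd w
    have hxu := hu'.ne hg
    split_ifs with h h' h'
    · exact absurd (h.symm.trans h') hxu
    · subst h; omega
    · subst h'; omega
    · omega
  have hcount := Finset.card_mul_le_card_mul (s := Bᶜ) (t := B) (m := r) (n := r) G.Adj
    (fun a ha => by
      rw [← hfull a ha, esDeg, ← card_neighborFinset_eq_degree]
      refine Finset.card_le_card (fun z hz => ?_)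
      rw [mem_neighborFinset] at hz
      simp only [Finset.bipartiteAbove, Finset.mem_filter]
      exact ⟨hindep a ha z hz, hz⟩)
    (fun b hb => by
      refine le_trans ?_ (hd b)
      rw [esDeg, ← card_neighborFinset_eq_degree]
      refine Finset.card_le_card (fun z hz => ?_)
      simp only [Finset.bipartiteBelow, Finset.mem_filter] at hz
      rw [mem_neighborFinset]
      exact hz.2.symm)
  have := Nat.le_of_mul_le_mul_right hcount (by omega)
  omega

theorem stmt_8 (r g : ℕ) (hr : 2 ≤ r) (hg : 3 ≤ g) :
    ∃ (n : ℕ) (G : SimpleGraph (Fin n)) (_ : DecidableRel G.Adj),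
      n ≤ 4 * g * r ^ g ∧ G.IsRegularOfDegree r ∧ (g : ℕ∞) ≤ G.girth := by
  classical
  obtain ⟨n, hn⟩ : ∃ n, n = 4 * r ^ g := ⟨_, rfl⟩
  have hpos : 0 < r ^ g := Nat.pow_pos (by omega)
  obtain ⟨G, hG, hd⟩ := es_regular r g n hr hg hn
  have hreg : G.IsRegularOfDegree r := fun w => by
    have := hd w
    rw [esDeg] at this
    convert this
  refine ⟨n, G, inferInstance, ?_, ?_, ?_⟩
  · rw [hn]
    exact Nat.mul_le_mul_right _ (by omega)
  · exact hreg
  · have hac : ¬ G.IsAcyclic := by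
      intro hac
      have : Nonempty (Fin n) := ⟨⟨0, by omega⟩⟩
      obtain ⟨F, hle, -, hF⟩ :=
        (connected_top (V := Fin n)).exists_isTree_le_of_le_of_isAcyclic le_top hac
      have h1 := hF.card_edgeFinset
      have h2 : G.edgeFinset.card ≤ F.edgeFinset.card :=
        Finset.card_le_card (edgeFinset_subset_edgeFinset.2 hle)
      have h3 := G.sum_degrees_eq_twice_card_edges
      have h4 : ∑ w, G.degree w = n * r := by
        rw [Finset.sum_congr rfl (fun w _ => hreg.degree_eq w)]
        simp
      rw [Fintype.card_fin] at h1
      nlinarith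
    obtain ⟨a, w, hw, hl⟩ := exists_girth_eq_length.2 hac
    rw [hl]
    exact SimpleGraph.le_egirth.1 hG.le_egirth a w hw
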